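/- Let Ω ⊂ ℝ² be a nonempty bounded open set, B a smooth real-valued function with B(x) > 0 for all x ∈ Ω, ψ continuous on the closure of Ω, smooth on Ω, with Δψ = B in Ω and ψ = 0 on ∂Ω, ψ_min := inf_Ω ψ, and A = (−∂₂ψ, ∂₁ψ) the canonical vector potential. Then for every h > 0 the lowest Dirichlet Pauli eigenvalue satisfies λ_{P₋}(h) ≥ h² λ^D(Ω) exp(2ψ_min/h). -/

import Mathlib

open MeasureTheory Filter Topology

noncomputable section

abbrev E2 : Type := EuclideanSpace ℝ (Fin 2)

/-- Partial derivative of a complex-valued function in the `i`-th coordinate direction. -/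
def pdC (i : Fin 2) (f : E2 → ℂ) (x : E2) : ℂ :=
  fderiv ℝ f x (EuclideanSpace.single i 1)

/-- Partial derivative of a real-valued function in the `i`-th coordinate direction. -/
def pdR (i : Fin 2) (f : E2 → ℝ) (x : E2) : ℝ :=
  fderiv ℝ f x (EuclideanSpace.single i 1)

/-- The Laplacian `Δf = ∂₁²f + ∂₂²f`. -/
def lapl (f : E2 → ℝ) (x : E2) : ℝ :=
  pdR 0 (pdR 0 f) x + pdR 1 (pdR 1 f) x

/-- The Pauli quadratic form
`Q_h(u) = ∫_Ω (|h∂₁u − iA₁u|² + |h∂₂u − iA₂u|²) dx − h∫_Ω B|u|² dx`. -/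
def pauliQ (Ω : Set E2) (A₁ A₂ B : E2 → ℝ) (h : ℝ) (u : E2 → ℂ) : ℝ :=
  (∫ x in Ω, (‖(h : ℂ) * pdC 0 u x - Complex.I * (A₁ x : ℂ) * u x‖ ^ 2
      + ‖(h : ℂ) * pdC 1 u x - Complex.I * (A₂ x : ℂ) * u x‖ ^ 2))
    - h * ∫ x in Ω, B x * ‖u x‖ ^ 2

/-- `u ∈ C_c^∞(Ω; ℂ)`. -/
def IsCptSmoothIn (Ω : Set E2) (u : E2 → ℂ) : Prop :=
  ContDiff ℝ (⊤ : ℕ∞) u ∧ HasCompactSupport u ∧ tsupport u ⊆ Ω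

/-- The lowest Dirichlet Pauli eigenvalue
`λ_{P₋}(h) = inf { Q_h(u)/∫_Ω|u|² : 0 ≠ u ∈ C_c^∞(Ω;ℂ) }`. -/
def lambdaP (Ω : Set E2) (A₁ A₂ B : E2 → ℝ) (h : ℝ) : ℝ :=
  sInf { r | ∃ u : E2 → ℂ, IsCptSmoothIn Ω u ∧ u ≠ 0 ∧
    r = pauliQ Ω A₁ A₂ B h u / ∫ x in Ω, ‖u x‖ ^ 2 }

/-- The lowest Dirichlet eigenvalue of the Laplacian on `Ω`. -/
def lambdaD (Ω : Set E2) : ℝ :=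
  sInf { r | ∃ v : E2 → ℂ, IsCptSmoothIn Ω v ∧ v ≠ 0 ∧
    r = (∫ x in Ω, (‖pdC 0 v x‖ ^ 2 + ‖pdC 1 v x‖ ^ 2)) / ∫ x in Ω, ‖v x‖ ^ 2 }

/-!
Write `Pⱼ = h∂ⱼ − iAⱼ`. Up to the divergence of a compactly supported field, `|P₁u + iP₂u|²` is the
integrand of the Pauli form, so `Q_h(u) = ∫_Ω |P₁u + iP₂u|²` for every test function `u`. For
`A = (−∂₂ψ, ∂₁ψ)` the substitution `v = e^{ψ/h} u` removes the magnetic field: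
`h(∂₁ + i∂₂)v = e^{ψ/h}(P₁ + iP₂)u`. If `m ≤ ψ ≤ M` on `Ω`, this gives
`Q_h(u) ≥ e^{−2M/h} h² ∫ |∂₁v + i∂₂v|² = e^{−2M/h} h² ∫ |∇v|²`, the equality being the factorisation
without a field. Finally `∫ |∇v|² ≥ λ^D ∫ |v|² ≥ λ^D e^{2m/h} ∫ |u|²`. When `Δψ > 0` in `Ω` and
`ψ = 0` on `∂Ω`, the maximum principle allows `M = 0`.
-/

section CompactSupport

variable {X : Type*} [TopologicalSpace X]

lemma tsupport_norm_sq_subset {V : Type*} [NormedAddCommGroup V] (f : X → V) :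
    tsupport (fun x => ‖f x‖ ^ 2) ⊆ tsupport f :=
  tsupport_comp_subset (g := fun z : V => ‖z‖ ^ 2) (by simp) f

lemma hasCompactSupport_norm_sq {V : Type*} [NormedAddCommGroup V] {f : X → V}
    (hfc : HasCompactSupport f) : HasCompactSupport (fun x => ‖f x‖ ^ 2) :=
  hfc.of_isClosed_subset (isClosed_tsupport _) (tsupport_norm_sq_subset f)

variable [MeasurableSpace X] [OpensMeasurableSpace X] {μ : Measure X}
  [IsFiniteMeasureOnCompacts μ]

lemma integrable_norm_sq_of_hasCompactSupport {V : Type*} [NormedAddCommGroup V] {f : X → V}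
    (hf : Continuous f) (hfc : HasCompactSupport f) : Integrable (fun x => ‖f x‖ ^ 2) μ :=
  (hf.norm.pow 2).integrable_of_hasCompactSupport (hasCompactSupport_norm_sq hfc)

lemma integrable_norm_sq_of_continuousOn {V : Type*} [NormedAddCommGroup V] {Ω : Set X}
    {f : X → V} {Y : Type*} [Zero Y] {u : X → Y} (hΩ : IsOpen Ω) (huc : HasCompactSupport u)
    (huΩ : tsupport u ⊆ Ω) (hf : ContinuousOn f Ω) (hfu : ∀ x ∉ tsupport u, f x = 0) :
    Integrable (fun x => ‖f x‖ ^ 2) μ := by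
  have hsupp : tsupport f ⊆ tsupport u :=
    closure_minimal (fun x hx => not_not.mp fun hxu => hx (hfu x hxu)) (isClosed_tsupport u)
  exact integrable_norm_sq_of_hasCompactSupport
    (hf.continuous_of_tsupport_subset hΩ (hsupp.trans huΩ))
    (huc.of_isClosed_subset (isClosed_tsupport f) hsupp)

lemma integrable_mul_of_tsupport_subset {R : Type*} [NormedRing R] {Ω : Set X} {f g : X → R}
    (hΩ : IsOpen Ω) (hf : ContinuousOn f Ω) (hg : Continuous g) (hgc : HasCompactSupport g)
    (hgΩ : tsupport g ⊆ Ω) : Integrable (fun x => f x * g x) μ :=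
  ((hf.mul hg.continuousOn).continuous_of_tsupport_subset hΩ
    (tsupport_mul_subset_right.trans hgΩ)).integrable_of_hasCompactSupport
    hgc.mul_left

end CompactSupport

section IntegrationByParts

variable {E F : Type*} [NormedAddCommGroup E] [NormedSpace ℝ E] [NormedAddCommGroup F]
  [NormedSpace ℝ F] {Ω : Set E}

lemma contDiff_of_contDiffOn_of_tsupport_subset {n : WithTop ℕ∞} {f : E → F} (hΩ : IsOpen Ω)
    (hf : ContDiffOn ℝ n f Ω) (hfΩ : tsupport f ⊆ Ω) : ContDiff ℝ n f := by
  refine contDiff_iff_contDiffAt.2 fun x => ?_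
  by_cases hx : x ∈ tsupport f
  · exact hf.contDiffAt (hΩ.mem_nhds (hfΩ hx))
  · exact contDiffAt_const.congr_of_eventuallyEq (notMem_tsupport_iff_eventuallyEq.mp hx)

lemma contDiffOn_fderiv_apply_of_isOpen {m n : WithTop ℕ∞} {f : E → F} (hΩ : IsOpen Ω)
    (hf : ContDiffOn ℝ n f Ω) (hmn : m + 1 ≤ n) (v : E) :
    ContDiffOn ℝ m (fun x => fderiv ℝ f x v) Ω :=
  (hf.fderiv_of_isOpen hΩ hmn).clm_apply contDiffOn_const

lemma fderiv_fderiv_apply_comm {f : E → F} {x : E} (hf : ContDiffAt ℝ 2 f x) (v w : E) :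
    fderiv ℝ (fun y => fderiv ℝ f y v) x w = fderiv ℝ (fun y => fderiv ℝ f y w) x v := by
  have hd : DifferentiableAt ℝ (fderiv ℝ f) x :=
    (hf.fderiv_right (m := 1) one_add_one_eq_two.le).differentiableAt one_ne_zero
  rw [fderiv_clm_apply hd (differentiableAt_const _),
    fderiv_clm_apply hd (differentiableAt_const _)]
  simpa using (hf.isSymmSndFDerivAt (by simp)) w v

variable [FiniteDimensional ℝ E] [MeasurableSpace E] [BorelSpace E] {μ : Measure E}
  [μ.IsAddHaarMeasure] {𝕜 : Type*} [NormedField 𝕜] [NormedAlgebra ℝ 𝕜] {f g : E → 𝕜}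

lemma setIntegral_mul_fderiv_eq_neg_fderiv_mul (hΩ : IsOpen Ω) (hf : ContDiffOn ℝ 1 f Ω)
    (hg : ContDiff ℝ 1 g) (hgc : HasCompactSupport g) (hgΩ : tsupport g ⊆ Ω) (v : E) :
    ∫ x in Ω, f x * fderiv ℝ g x v ∂μ = -∫ x in Ω, fderiv ℝ f x v * g x ∂μ := by
  have hf'g : Integrable (fun x => fderiv ℝ f x v * g x) μ :=
    integrable_mul_of_tsupport_subset hΩ
      (contDiffOn_fderiv_apply_of_isOpen (m := 0) hΩ hf (by simp) v).continuousOn hg.continuous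
      hgc hgΩ
  have hfg' : Integrable (fun x => f x * fderiv ℝ g x v) μ :=
    integrable_mul_of_tsupport_subset hΩ hf.continuousOn
      ((hg.continuous_fderiv one_ne_zero).clm_apply continuous_const) (hgc.fderiv_apply ℝ v)
      ((tsupport_fderiv_apply_subset ℝ v).trans hgΩ)
  have hfg : Integrable (fun x => f x * g x) μ :=
    integrable_mul_of_tsupport_subset hΩ hf.continuousOn hg.continuous hgc hgΩ
  rw [setIntegral_eq_integral_of_forall_compl_eq_zero fun x hx => ?_,
    setIntegral_eq_integral_of_forall_compl_eq_zero fun x hx => ?_]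
  · exact integral_mul_fderiv_eq_neg_fderiv_mul_of_integrable hf'g hfg' hfg
      (fun x hx => (hf.contDiffAt (hΩ.mem_nhds (hgΩ hx))).differentiableAt one_ne_zero)
      (fun x _ => hg.differentiable one_ne_zero x)
  · rw [image_eq_zero_of_notMem_tsupport fun h => hx (hgΩ h), mul_zero]
  · simp [fderiv_of_notMem_tsupport ℝ fun h => hx (hgΩ h)]

lemma setIntegral_fderiv_mul_fderiv_comm (hΩ : IsOpen Ω) (hf : ContDiffOn ℝ 2 f Ω)
    (hg : ContDiff ℝ 1 g) (hgc : HasCompactSupport g) (hgΩ : tsupport g ⊆ Ω) (v w : E) :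
    ∫ x in Ω, fderiv ℝ f x v * fderiv ℝ g x w ∂μ
      = ∫ x in Ω, fderiv ℝ f x w * fderiv ℝ g x v ∂μ := by
  have hf' := contDiffOn_fderiv_apply_of_isOpen hΩ hf one_add_one_eq_two.le
  rw [setIntegral_mul_fderiv_eq_neg_fderiv_mul hΩ (hf' v) hg hgc hgΩ,
    setIntegral_mul_fderiv_eq_neg_fderiv_mul hΩ (hf' w) hg hgc hgΩ]
  congr 1
  refine setIntegral_congr_fun hΩ.measurableSet fun x hx => ?_
  simp only [fderiv_fderiv_apply_comm (hf.contDiffAt (hΩ.mem_nhds hx)) v w]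

end IntegrationByParts

section MaximumPrinciple

lemma deriv_deriv_nonpos_of_isLocalMax {f : ℝ → ℝ} {x : ℝ} (hmax : IsLocalMax f x)
    (hc : ContinuousAt f x) : deriv (deriv f) x ≤ 0 := by
  by_contra! hpos
  have hmin : IsLocalMin f x := isLocalMin_of_deriv_deriv_pos hpos hmax.deriv_eq_zero hc
  have hconst : f =ᶠ[𝓝 x] fun _ => f x := by
    filter_upwards [hmax, hmin] with t hle hge using le_antisymm hle hge
  simp [hconst.deriv.deriv_eq] at hpos

lemma fderiv_fderiv_apply_nonpos_of_isLocalMax {E : Type*} [NormedAddCommGroup E]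
    [NormedSpace ℝ E] {f : E → ℝ} {x : E} (hf : ContDiffAt ℝ 2 f x) (hmax : IsLocalMax f x)
    (v : E) : fderiv ℝ (fun y => fderiv ℝ f y v) x v ≤ 0 := by
  let γ : ℝ → E := fun t => x + t • v
  have hγ : ∀ t, HasDerivAt γ v t := fun t => by
    simpa [γ] using ((hasDerivAt_id t).smul_const v).const_add x
  have hγ0 : γ 0 = x := by simp [γ]
  have hγx : Tendsto γ (𝓝 0) (𝓝 x) := hγ0 ▸ (hγ 0).continuousAt.tendsto
  have hderiv : deriv (f ∘ γ) =ᶠ[𝓝 0] fun t => fderiv ℝ f (γ t) v := by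
    filter_upwards [hγx.eventually (hf.eventually (by simp))] with t ht
    exact ((ht.differentiableAt two_ne_zero).hasFDerivAt.comp_hasDerivAt t (hγ t)).deriv
  have hderiv2 : deriv (deriv (f ∘ γ)) 0 = fderiv ℝ (fun y => fderiv ℝ f y v) x v := by
    have hd : DifferentiableAt ℝ (fun y => fderiv ℝ f y v) (γ 0) := by
      rw [hγ0]
      exact ((hf.fderiv_right (m := 1) one_add_one_eq_two.le).differentiableAt
        one_ne_zero).clm_apply (differentiableAt_const _)
    rw [hderiv.deriv_eq, ← hγ0]
    exact (hd.hasFDerivAt.comp_hasDerivAt 0 (hγ 0)).deriv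
  rw [← hderiv2]
  refine deriv_deriv_nonpos_of_isLocalMax ?_ ?_
  · filter_upwards [hγx.eventually hmax] with t ht
    simpa [hγ0] using ht
  · exact ContinuousAt.comp (hγ0 ▸ hf.continuousAt) (hγ 0).continuousAt

lemma lapl_nonpos_of_isLocalMax {f : E2 → ℝ} {x : E2} (hf : ContDiffAt ℝ 2 f x)
    (hmax : IsLocalMax f x) : lapl f x ≤ 0 :=
  add_nonpos (fderiv_fderiv_apply_nonpos_of_isLocalMax hf hmax _)
    (fderiv_fderiv_apply_nonpos_of_isLocalMax hf hmax _)

lemma le_of_lapl_pos_of_forall_frontier_le {Ω : Set E2} (hΩo : IsOpen Ω)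
    (hΩb : Bornology.IsBounded Ω) {f : E2 → ℝ} (hfc : ContinuousOn f (closure Ω))
    (hf : ContDiffOn ℝ 2 f Ω) (hlapl : ∀ x ∈ Ω, 0 < lapl f x) {c : ℝ}
    (hfr : ∀ x ∈ frontier Ω, f x ≤ c) {x : E2} (hx : x ∈ Ω) : f x ≤ c := by
  obtain ⟨z, hz, hmax⟩ := hΩb.isCompact_closure.exists_isMaxOn ⟨x, subset_closure hx⟩ hfc
  have hzΩ : z ∉ Ω := fun hzΩ => by
    have hzn : Ω ∈ 𝓝 z := hΩo.mem_nhds hzΩ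
    have hloc : IsLocalMax f z := (hmax.on_subset subset_closure).isLocalMax hzn
    exact (hlapl z hzΩ).not_ge (lapl_nonpos_of_isLocalMax (hf.contDiffAt hzn) hloc)
  exact (hmax (subset_closure hx)).trans (hfr z ⟨hz, by rwa [hΩo.interior_eq]⟩)

lemma mem_Icc_sInf_image_of_lapl_pos {Ω : Set E2} (hΩo : IsOpen Ω)
    (hΩb : Bornology.IsBounded Ω) {f : E2 → ℝ} (hfc : ContinuousOn f (closure Ω))
    (hf : ContDiffOn ℝ 2 f Ω) (hlapl : ∀ x ∈ Ω, 0 < lapl f x) {c : ℝ}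
    (hfr : ∀ x ∈ frontier Ω, f x ≤ c) {x : E2} (hx : x ∈ Ω) :
    f x ∈ Set.Icc (sInf (f '' Ω)) c := by
  have hbdd : BddBelow (f '' Ω) :=
    (hΩb.isCompact_closure.bddBelow_image hfc).mono (Set.image_mono subset_closure)
  exact ⟨csInf_le hbdd (Set.mem_image_of_mem f hx),
    le_of_lapl_pos_of_forall_frontier_le hΩo hΩb hfc hf hlapl hfr hx⟩

end MaximumPrinciple

open scoped ComplexConjugate

section TestFunctions

variable {Ω : Set E2} {u : E2 → ℂ}

lemma exists_isCptSmoothIn_ne_zero (hΩo : IsOpen Ω) (hΩne : Ω.Nonempty) :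
    ∃ u : E2 → ℂ, IsCptSmoothIn Ω u ∧ u ≠ 0 := by
  obtain ⟨x, hx⟩ := hΩne
  obtain ⟨f, hfΩ, hfc, hf, -, hfx⟩ := exists_contDiff_tsupport_subset (n := ⊤) (hΩo.mem_nhds hx)
  refine ⟨Complex.ofRealCLM ∘ f, ⟨Complex.ofRealCLM.contDiff.comp hf, hfc.comp_left rfl,
    (tsupport_comp_subset rfl _).trans hfΩ⟩, fun h0 => ?_⟩
  simpa [hfx] using congrFun h0 x

lemma continuous_pdC (hu : ContDiff ℝ 1 u) (i : Fin 2) : Continuous (pdC i u) :=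
  (hu.continuous_fderiv one_ne_zero).clm_apply continuous_const

namespace IsCptSmoothIn

lemma contDiff_one (hu : IsCptSmoothIn Ω u) : ContDiff ℝ 1 u := hu.1.of_le (by simp)

lemma differentiable (hu : IsCptSmoothIn Ω u) : Differentiable ℝ u :=
  hu.contDiff_one.differentiable one_ne_zero

lemma integrable_norm_sq (hu : IsCptSmoothIn Ω u) : Integrable (fun x => ‖u x‖ ^ 2) :=
  integrable_norm_sq_of_hasCompactSupport hu.1.continuous hu.2.1

lemma setIntegral_norm_sq_pos (hu : IsCptSmoothIn Ω u) (hne : u ≠ 0) :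
    0 < ∫ x in Ω, ‖u x‖ ^ 2 := by
  have h0 : ∀ x ∉ Ω, ‖u x‖ ^ 2 = 0 := fun x hx => by
    simp [image_eq_zero_of_notMem_tsupport fun h => hx (hu.2.2 h)]
  obtain ⟨x, hx⟩ := Function.ne_iff.mp hne
  rw [setIntegral_eq_integral_of_forall_compl_eq_zero h0]
  exact (hu.1.continuous.norm.pow 2).integral_pos_of_hasCompactSupport_nonneg_nonzero
    (hasCompactSupport_norm_sq hu.2.1) (fun x => sq_nonneg ‖u x‖)
    (pow_ne_zero 2 (norm_ne_zero_iff.mpr hx))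

lemma smul_of_contDiffOn (hΩ : IsOpen Ω) (hu : IsCptSmoothIn Ω u) {a : E2 → ℝ}
    (ha : ContDiffOn ℝ (⊤ : ℕ∞) a Ω) : IsCptSmoothIn Ω (fun x => a x • u x) := by
  have hsub : tsupport (fun x => a x • u x) ⊆ tsupport u := tsupport_smul_subset_right a u
  exact ⟨contDiff_of_contDiffOn_of_tsupport_subset hΩ (ha.smul hu.1.contDiffOn)
    (hsub.trans hu.2.2), hu.2.1.of_isClosed_subset (isClosed_tsupport _) hsub, hsub.trans hu.2.2⟩

lemma integrable_mul_norm_sq (hΩ : IsOpen Ω) (hu : IsCptSmoothIn Ω u) {a : E2 → ℝ}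
    (ha : ContinuousOn a Ω) : Integrable (fun x => a x * ‖u x‖ ^ 2) :=
  integrable_mul_of_tsupport_subset hΩ ha (hu.1.continuous.norm.pow 2)
    (hasCompactSupport_norm_sq hu.2.1) ((tsupport_norm_sq_subset u).trans hu.2.2)

lemma integrable_mul_pdR_norm_sq (hΩ : IsOpen Ω) (hu : IsCptSmoothIn Ω u) {a : E2 → ℝ}
    (ha : ContinuousOn a Ω) (i : Fin 2) :
    Integrable (fun x => a x * pdR i (fun y => ‖u y‖ ^ 2) x) :=
  integrable_mul_of_tsupport_subset hΩ ha
    (((hu.contDiff_one.norm_sq ℝ).continuous_fderiv one_ne_zero).clm_apply continuous_const)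
    ((hasCompactSupport_norm_sq hu.2.1).fderiv_apply ℝ _)
    ((tsupport_fderiv_apply_subset ℝ _).trans ((tsupport_norm_sq_subset u).trans hu.2.2))

lemma setIntegral_mul_pdR_norm_sq (hΩ : IsOpen Ω) (hu : IsCptSmoothIn Ω u) {a : E2 → ℝ}
    (ha : ContDiffOn ℝ 1 a Ω) (i : Fin 2) :
    ∫ x in Ω, a x * pdR i (fun y => ‖u y‖ ^ 2) x = -∫ x in Ω, pdR i a x * ‖u x‖ ^ 2 :=
  setIntegral_mul_fderiv_eq_neg_fderiv_mul hΩ ha (hu.contDiff_one.norm_sq ℝ)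
    (hasCompactSupport_norm_sq hu.2.1) ((tsupport_norm_sq_subset u).trans hu.2.2) _

lemma integrable_conj_pdC_mul_pdC (hu : IsCptSmoothIn Ω u) (i j : Fin 2) :
    Integrable (fun x => conj (pdC i u x) * pdC j u x) :=
  ((Complex.continuous_conj.comp (continuous_pdC hu.contDiff_one i)).mul
    (continuous_pdC hu.contDiff_one j)).integrable_of_hasCompactSupport
    (hu.2.1.fderiv_apply ℝ _).mul_left

/-- In real terms the integrand is a `2 × 2` Jacobian minor of `u`, a null Lagrangian. -/
lemma setIntegral_im_conj_pdC_mul_pdC (hΩ : IsOpen Ω) (hu : IsCptSmoothIn Ω u) (i j : Fin 2) :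
    ∫ x in Ω, (conj (pdC i u x) * pdC j u x).im = 0 := by
  have hconj : ContDiff ℝ 2 (fun x => conj (u x)) :=
    Complex.conjCLE.contDiff.comp (contDiff_infty.mp hu.1 2)
  have hpdC_conj : ∀ k x, pdC k (fun y => conj (u y)) x = conj (pdC k u x) := fun k x => by
    have := (Complex.conjCLE : ℂ →L[ℝ] ℂ).hasFDerivAt.comp x (hu.differentiable x).hasFDerivAt
    exact congrArg (· (EuclideanSpace.single k 1)) this.fderiv
  have hreal : conj (∫ x in Ω, conj (pdC i u x) * pdC j u x)
      = ∫ x in Ω, conj (pdC i u x) * pdC j u x := calc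
    _ = ∫ x in Ω, pdC j (fun y => conj (u y)) x * pdC i u x := by
      rw [← integral_conj]
      simp only [hpdC_conj, map_mul, Complex.conj_conj, mul_comm]
    _ = ∫ x in Ω, pdC i (fun y => conj (u y)) x * pdC j u x :=
      setIntegral_fderiv_mul_fderiv_comm hΩ hconj.contDiffOn hu.contDiff_one hu.2.1 hu.2.2 _ _
    _ = ∫ x in Ω, conj (pdC i u x) * pdC j u x := by simp only [hpdC_conj]
  calc
    _ = (∫ x in Ω, conj (pdC i u x) * pdC j u x).im :=
      integral_im (hu.integrable_conj_pdC_mul_pdC i j).integrableOn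
    _ = 0 := Complex.conj_eq_iff_im.mp hreal

end IsCptSmoothIn

end TestFunctions

section PauliFactorization

variable {Ω : Set E2} {A₁ A₂ B : E2 → ℝ} {u : E2 → ℂ}

/-- The magnetic derivative `h∂ᵢu − iau`, where `a` is the `i`-th component of the vector
potential. -/
def magneticDeriv (i : Fin 2) (a : E2 → ℝ) (h : ℝ) (u : E2 → ℂ) (x : E2) : ℂ :=
  (h : ℂ) * pdC i u x - Complex.I * (a x : ℂ) * u x

/-- The first-order factor `P₁ + iP₂` of the Pauli operator, where `Pⱼ = h∂ⱼ − iAⱼ`. Without a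
field it is `h(∂₁ + i∂₂)`, a multiple of the Cauchy–Riemann operator. -/
def magneticDbar (A₁ A₂ : E2 → ℝ) (h : ℝ) (u : E2 → ℂ) (x : E2) : ℂ :=
  magneticDeriv 0 A₁ h u x + Complex.I * magneticDeriv 1 A₂ h u x

lemma magneticDeriv_of_notMem_tsupport {x : E2} (hx : x ∉ tsupport u) (i : Fin 2) (a : E2 → ℝ)
    (h : ℝ) : magneticDeriv i a h u x = 0 := by
  simp [magneticDeriv, pdC, image_eq_zero_of_notMem_tsupport hx, fderiv_of_notMem_tsupport ℝ hx]

lemma norm_add_I_mul_sq (z w : ℂ) :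
    ‖z + Complex.I * w‖ ^ 2 = ‖z‖ ^ 2 + ‖w‖ ^ 2 - 2 * (conj z * w).im := by
  simp only [← Complex.normSq_eq_norm_sq, Complex.normSq_apply, Complex.add_re, Complex.add_im,
    Complex.mul_re, Complex.mul_im, Complex.I_re, Complex.I_im, Complex.conj_re, Complex.conj_im]
  ring

lemma pdR_norm_sq {x : E2} (hu : DifferentiableAt ℝ u x) (i : Fin 2) :
    pdR i (fun y => ‖u y‖ ^ 2) x = 2 * (conj (u x) * pdC i u x).re := by
  have := congrArg (· (EuclideanSpace.single i 1)) hu.hasFDerivAt.norm_sq.fderiv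
  simpa [pdR, pdC, Complex.inner, mul_comm, mul_add] using this

lemma norm_magneticDbar_sq {x : E2} (hu : DifferentiableAt ℝ u x) (h : ℝ) :
    ‖magneticDbar A₁ A₂ h u x‖ ^ 2
      = ‖magneticDeriv 0 A₁ h u x‖ ^ 2 + ‖magneticDeriv 1 A₂ h u x‖ ^ 2
        + h * (A₂ x * pdR 0 (fun y => ‖u y‖ ^ 2) x - A₁ x * pdR 1 (fun y => ‖u y‖ ^ 2) x)
        - 2 * h ^ 2 * (conj (pdC 0 u x) * pdC 1 u x).im := by
  have cross : (conj (magneticDeriv 0 A₁ h u x) * magneticDeriv 1 A₂ h u x).im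
      = h ^ 2 * (conj (pdC 0 u x) * pdC 1 u x).im
        - h * (A₂ x * (conj (u x) * pdC 0 u x).re - A₁ x * (conj (u x) * pdC 1 u x).re) := by
    simp only [magneticDeriv, map_sub, map_mul, Complex.conj_ofReal, Complex.conj_I,
      Complex.mul_im, Complex.mul_re, Complex.sub_re, Complex.sub_im, Complex.neg_re,
      Complex.neg_im, Complex.conj_re, Complex.conj_im, Complex.ofReal_re, Complex.ofReal_im,
      Complex.I_re, Complex.I_im]
    ring
  rw [magneticDbar, norm_add_I_mul_sq, cross, pdR_norm_sq hu, pdR_norm_sq hu]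
  ring

namespace IsCptSmoothIn

lemma continuousOn_magneticDeriv (hu : IsCptSmoothIn Ω u) {a : E2 → ℝ} (ha : ContinuousOn a Ω)
    (h : ℝ) (i : Fin 2) : ContinuousOn (magneticDeriv i a h u) Ω :=
  (continuousOn_const.mul (continuous_pdC hu.contDiff_one i).continuousOn).sub
    ((continuousOn_const.mul (Complex.continuous_ofReal.comp_continuousOn ha)).mul
      hu.1.continuous.continuousOn)

lemma integrable_norm_magneticDeriv_sq (hΩ : IsOpen Ω) (hu : IsCptSmoothIn Ω u) {a : E2 → ℝ}
    (ha : ContinuousOn a Ω) (h : ℝ) (i : Fin 2) :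
    Integrable (fun x => ‖magneticDeriv i a h u x‖ ^ 2) :=
  integrable_norm_sq_of_continuousOn hΩ hu.2.1 hu.2.2 (hu.continuousOn_magneticDeriv ha h i)
    fun _ hx => magneticDeriv_of_notMem_tsupport hx i a h

lemma integrable_norm_magneticDbar_sq (hΩ : IsOpen Ω) (hu : IsCptSmoothIn Ω u)
    (hA₁ : ContinuousOn A₁ Ω) (hA₂ : ContinuousOn A₂ Ω) (h : ℝ) :
    Integrable (fun x => ‖magneticDbar A₁ A₂ h u x‖ ^ 2) :=
  integrable_norm_sq_of_continuousOn hΩ hu.2.1 hu.2.2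
    ((hu.continuousOn_magneticDeriv hA₁ h 0).add
      (continuousOn_const.mul (hu.continuousOn_magneticDeriv hA₂ h 1)))
    fun _ hx => by simp [magneticDbar, magneticDeriv_of_notMem_tsupport hx]

lemma setIntegral_curl (hΩ : IsOpen Ω) (hu : IsCptSmoothIn Ω u) (hA₁ : ContDiffOn ℝ 1 A₁ Ω)
    (hA₂ : ContDiffOn ℝ 1 A₂ Ω) (hB : ∀ x ∈ Ω, B x = pdR 0 A₂ x - pdR 1 A₁ x) :
    ∫ x in Ω, (A₂ x * pdR 0 (fun y => ‖u y‖ ^ 2) x - A₁ x * pdR 1 (fun y => ‖u y‖ ^ 2) x)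
      = -∫ x in Ω, B x * ‖u x‖ ^ 2 := by
  have hpdR : ∀ {a : E2 → ℝ}, ContDiffOn ℝ 1 a Ω → ∀ i, ContinuousOn (pdR i a) Ω :=
    fun ha i => (contDiffOn_fderiv_apply_of_isOpen (m := 0) hΩ ha (by simp) _).continuousOn
  have hBu : ∫ x in Ω, B x * ‖u x‖ ^ 2
      = (∫ x in Ω, pdR 0 A₂ x * ‖u x‖ ^ 2) - ∫ x in Ω, pdR 1 A₁ x * ‖u x‖ ^ 2 := by
    rw [← integral_sub (hu.integrable_mul_norm_sq hΩ (hpdR hA₂ 0)).integrableOn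
      (hu.integrable_mul_norm_sq hΩ (hpdR hA₁ 1)).integrableOn]
    exact setIntegral_congr_fun hΩ.measurableSet fun x hx => by simp only [hB x hx, sub_mul]
  rw [integral_sub (hu.integrable_mul_pdR_norm_sq hΩ hA₂.continuousOn 0).integrableOn
      (hu.integrable_mul_pdR_norm_sq hΩ hA₁.continuousOn 1).integrableOn,
    hu.setIntegral_mul_pdR_norm_sq hΩ hA₂, hu.setIntegral_mul_pdR_norm_sq hΩ hA₁, hBu]
  ring

theorem setIntegral_norm_magneticDbar_sq (hΩ : IsOpen Ω) (hu : IsCptSmoothIn Ω u)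
    (hA₁ : ContDiffOn ℝ 1 A₁ Ω) (hA₂ : ContDiffOn ℝ 1 A₂ Ω)
    (hB : ∀ x ∈ Ω, B x = pdR 0 A₂ x - pdR 1 A₁ x) (h : ℝ) :
    ∫ x in Ω, ‖magneticDbar A₁ A₂ h u x‖ ^ 2 = pauliQ Ω A₁ A₂ B h u := by
  have hkin : Integrable (fun x => ‖magneticDeriv 0 A₁ h u x‖ ^ 2
      + ‖magneticDeriv 1 A₂ h u x‖ ^ 2) :=
    (hu.integrable_norm_magneticDeriv_sq hΩ hA₁.continuousOn h 0).add
      (hu.integrable_norm_magneticDeriv_sq hΩ hA₂.continuousOn h 1)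
  have hcurl : Integrable (fun x => h * (A₂ x * pdR 0 (fun y => ‖u y‖ ^ 2) x
      - A₁ x * pdR 1 (fun y => ‖u y‖ ^ 2) x)) :=
    ((hu.integrable_mul_pdR_norm_sq hΩ hA₂.continuousOn 0).sub
      (hu.integrable_mul_pdR_norm_sq hΩ hA₁.continuousOn 1)).const_mul h
  have hjac : Integrable (fun x => 2 * h ^ 2 * (conj (pdC 0 u x) * pdC 1 u x).im) :=
    ((hu.integrable_conj_pdC_mul_pdC 0 1).im).const_mul (2 * h ^ 2)
  calc
    ∫ x in Ω, ‖magneticDbar A₁ A₂ h u x‖ ^ 2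
      = (∫ x in Ω, (‖magneticDeriv 0 A₁ h u x‖ ^ 2 + ‖magneticDeriv 1 A₂ h u x‖ ^ 2))
        + h * (∫ x in Ω, (A₂ x * pdR 0 (fun y => ‖u y‖ ^ 2) x
          - A₁ x * pdR 1 (fun y => ‖u y‖ ^ 2) x))
        - 2 * h ^ 2 * ∫ x in Ω, (conj (pdC 0 u x) * pdC 1 u x).im := by
      simp only [norm_magneticDbar_sq (hu.differentiable _)]
      rw [integral_sub (hkin.fun_add hcurl).integrableOn hjac.integrableOn,
        integral_add hkin.integrableOn hcurl.integrableOn, integral_const_mul, integral_const_mul]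
    _ = pauliQ Ω A₁ A₂ B h u := by
      rw [hu.setIntegral_curl hΩ hA₁ hA₂ hB, hu.setIntegral_im_conj_pdC_mul_pdC hΩ, pauliQ]
      simp only [magneticDeriv]
      ring

lemma setIntegral_norm_magneticDbar_zero_sq (hΩ : IsOpen Ω) (hu : IsCptSmoothIn Ω u) (h : ℝ) :
    ∫ x in Ω, ‖magneticDbar 0 0 h u x‖ ^ 2
      = h ^ 2 * ∫ x in Ω, (‖pdC 0 u x‖ ^ 2 + ‖pdC 1 u x‖ ^ 2) := by
  rw [hu.setIntegral_norm_magneticDbar_sq (A₁ := 0) (A₂ := 0) (B := 0) hΩ contDiffOn_const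
    contDiffOn_const (fun x _ => by simp [pdR]) h, ← integral_const_mul]
  simp [pauliQ, mul_pow, mul_add]

end IsCptSmoothIn

end PauliFactorization

section GaugeTransform

variable {Ω : Set E2} {ψ : E2 → ℝ} {u : E2 → ℂ} {h : ℝ}

lemma lapl_eq_pdR_sub_pdR_neg (ψ : E2 → ℝ) (x : E2) :
    lapl ψ x = pdR 0 (pdR 0 ψ) x - pdR 1 (fun y => -pdR 1 ψ y) x := by
  rw [pdR.eq_def 1 (fun y => -pdR 1 ψ y), fderiv_fun_neg, neg_apply, sub_neg_eq_add]
  rfl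

/-- The substitution `u ↦ e^{ψ/h} u`, which trades the potential `(−∂₂ψ, ∂₁ψ)` for a weight. -/
def gaugeTransform (ψ : E2 → ℝ) (h : ℝ) (u : E2 → ℂ) (x : E2) : ℂ :=
  Real.exp (ψ x / h) • u x

lemma gaugeTransform_ne_zero (hne : u ≠ 0) : gaugeTransform ψ h u ≠ 0 := by
  obtain ⟨x, hx⟩ := Function.ne_iff.mp hne
  exact Function.ne_iff.mpr ⟨x, smul_ne_zero (Real.exp_pos _).ne' hx⟩

lemma norm_gaugeTransform_sq (x : E2) :
    ‖gaugeTransform ψ h u x‖ ^ 2 = Real.exp (2 * ψ x / h) * ‖u x‖ ^ 2 := by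
  rw [gaugeTransform, norm_smul, Real.norm_eq_abs, Real.abs_exp, mul_pow, ← Real.exp_nat_mul,
    Nat.cast_ofNat, mul_div_assoc]

protected lemma IsCptSmoothIn.gaugeTransform (hΩ : IsOpen Ω) (hu : IsCptSmoothIn Ω u)
    (hψ : ContDiffOn ℝ (⊤ : ℕ∞) ψ Ω) : IsCptSmoothIn Ω (gaugeTransform ψ h u) :=
  hu.smul_of_contDiffOn hΩ (hψ.div_const h).exp

lemma mul_pdC_gaugeTransform (hh : h ≠ 0) {x : E2} (hψ : DifferentiableAt ℝ ψ x)
    (hu : DifferentiableAt ℝ u x) (i : Fin 2) :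
    h * pdC i (gaugeTransform ψ h u) x
      = Real.exp (ψ x / h) * (h * pdC i u x + pdR i ψ x * u x) := by
  have hexp : HasFDerivAt (fun y => Real.exp (ψ y / h))
      (Real.exp (ψ x / h) • (h⁻¹ • fderiv ℝ ψ x)) x := by
    simpa only [div_eq_inv_mul] using (hψ.hasFDerivAt.const_mul h⁻¹).exp
  have hpdC := congrArg (· (EuclideanSpace.single i 1)) (hexp.fun_smul hu.hasFDerivAt).fderiv
  have hh' : (h : ℂ) ≠ 0 := Complex.ofReal_ne_zero.mpr hh
  change pdC i (gaugeTransform ψ h u) x = _ at hpdC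
  rw [hpdC]
  simp only [pdC, pdR, add_apply, smul_apply, ContinuousLinearMap.smulRight_apply,
    Complex.real_smul, smul_eq_mul, Complex.ofReal_mul, Complex.ofReal_inv]
  field_simp

theorem magneticDbar_zero_gaugeTransform (hh : h ≠ 0) {x : E2} (hψ : DifferentiableAt ℝ ψ x)
    (hu : DifferentiableAt ℝ u x) :
    magneticDbar 0 0 h (gaugeTransform ψ h u) x
      = gaugeTransform ψ h (magneticDbar (fun y => -pdR 1 ψ y) (pdR 0 ψ) h u) x := by
  rw [gaugeTransform, Complex.real_smul]
  simp only [magneticDbar, magneticDeriv, mul_pdC_gaugeTransform hh hψ hu, Pi.zero_apply,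
    Complex.ofReal_zero, Complex.ofReal_neg]
  linear_combination (Real.exp (ψ x / h) * pdR 0 ψ x * u x : ℂ) * Complex.I_sq

end GaugeTransform

section EigenvalueComparison

variable {Ω : Set E2} {B ψ : E2 → ℝ} {u : E2 → ℂ} {h m M : ℝ}

lemma lambdaD_nonneg (Ω : Set E2) : 0 ≤ lambdaD Ω := by
  refine Real.sInf_nonneg ?_
  rintro r ⟨v, -, -, rfl⟩
  positivity

lemma lambdaD_mul_le (hu : IsCptSmoothIn Ω u) (hne : u ≠ 0) :
    lambdaD Ω * ∫ x in Ω, ‖u x‖ ^ 2 ≤ ∫ x in Ω, (‖pdC 0 u x‖ ^ 2 + ‖pdC 1 u x‖ ^ 2) := by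
  rw [← le_div_iff₀ (hu.setIntegral_norm_sq_pos hne)]
  refine csInf_le ⟨0, ?_⟩ ⟨u, hu, hne, rfl⟩
  rintro r ⟨v, -, -, rfl⟩
  positivity

lemma le_lambdaP {A₁ A₂ : E2 → ℝ} {c : ℝ} (hΩo : IsOpen Ω) (hΩne : Ω.Nonempty)
    (hc : ∀ u, IsCptSmoothIn Ω u → u ≠ 0 → c * ∫ x in Ω, ‖u x‖ ^ 2 ≤ pauliQ Ω A₁ A₂ B h u) :
    c ≤ lambdaP Ω A₁ A₂ B h := by
  obtain ⟨w, hw, hw0⟩ := exists_isCptSmoothIn_ne_zero hΩo hΩne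
  refine le_csInf ⟨_, w, hw, hw0, rfl⟩ ?_
  rintro r ⟨u, hu, hne, rfl⟩
  exact (le_div_iff₀ (hu.setIntegral_norm_sq_pos hne)).mpr (hc u hu hne)

namespace IsCptSmoothIn

lemma exp_mul_setIntegral_norm_sq_le (hΩ : IsOpen Ω) (hu : IsCptSmoothIn Ω u) (hh : 0 < h)
    (hψ : ContDiffOn ℝ (⊤ : ℕ∞) ψ Ω) (hm : ∀ x ∈ Ω, m ≤ ψ x) :
    Real.exp (2 * m / h) * ∫ x in Ω, ‖u x‖ ^ 2 ≤ ∫ x in Ω, ‖gaugeTransform ψ h u x‖ ^ 2 := by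
  rw [← integral_const_mul]
  refine setIntegral_mono_on (hu.integrable_norm_sq.const_mul _).integrableOn
    (hu.gaugeTransform hΩ hψ).integrable_norm_sq.integrableOn hΩ.measurableSet fun x hx => ?_
  rw [norm_gaugeTransform_sq]
  gcongr
  exact hm x hx

lemma sq_mul_setIntegral_norm_pdC_sq_le_exp_mul_pauliQ (hΩ : IsOpen Ω) (hu : IsCptSmoothIn Ω u)
    (hh : 0 < h) (hψ : ContDiffOn ℝ (⊤ : ℕ∞) ψ Ω) (hΔ : ∀ x ∈ Ω, lapl ψ x = B x)
    (hM : ∀ x ∈ Ω, ψ x ≤ M) :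
    h ^ 2 * ∫ x in Ω, (‖pdC 0 (gaugeTransform ψ h u) x‖ ^ 2
        + ‖pdC 1 (gaugeTransform ψ h u) x‖ ^ 2)
      ≤ Real.exp (2 * M / h) * pauliQ Ω (fun x => -pdR 1 ψ x) (pdR 0 ψ) B h u := by
  have hpdR : ∀ i, ContDiffOn ℝ 1 (pdR i ψ) Ω := fun i =>
    contDiffOn_fderiv_apply_of_isOpen hΩ (contDiffOn_infty.mp hψ 2) one_add_one_eq_two.le _
  have hv := hu.gaugeTransform (h := h) hΩ hψ
  rw [← hv.setIntegral_norm_magneticDbar_zero_sq hΩ,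
    ← hu.setIntegral_norm_magneticDbar_sq hΩ (hpdR 1).neg (hpdR 0)
      (fun x hx => (hΔ x hx).symm.trans (lapl_eq_pdR_sub_pdR_neg ψ x)) h, ← integral_const_mul]
  refine setIntegral_mono_on
    (hv.integrable_norm_magneticDbar_sq hΩ continuousOn_const continuousOn_const h).integrableOn
    ((hu.integrable_norm_magneticDbar_sq hΩ (hpdR 1).neg.continuousOn (hpdR 0).continuousOn
      h).const_mul _).integrableOn hΩ.measurableSet fun x hx => ?_
  rw [magneticDbar_zero_gaugeTransform hh.ne'
    ((hψ.contDiffAt (hΩ.mem_nhds hx)).differentiableAt (by simp)) (hu.differentiable x),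
    norm_gaugeTransform_sq]
  gcongr
  exact hM x hx

end IsCptSmoothIn

theorem stmt2_general (hΩo : IsOpen Ω) (hΩne : Ω.Nonempty)
    (hψ : ContDiffOn ℝ (⊤ : ℕ∞) ψ Ω) (hΔ : ∀ x ∈ Ω, lapl ψ x = B x)
    (hbd : ∀ x ∈ Ω, ψ x ∈ Set.Icc m M) (hh : 0 < h) :
    lambdaP Ω (fun x => -pdR 1 ψ x) (fun x => pdR 0 ψ x) B h
      ≥ h ^ 2 * lambdaD Ω * Real.exp (2 * (m - M) / h) := by
  refine le_lambdaP hΩo hΩne fun u hu hne => ?_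
  have hexp : Real.exp (2 * (m - M) / h) = Real.exp (2 * m / h) / Real.exp (2 * M / h) := by
    rw [← Real.exp_sub, mul_sub, sub_div]
  have hv := hu.gaugeTransform (h := h) hΩo hψ
  rw [hexp, mul_div_assoc', div_mul_eq_mul_div, div_le_iff₀' (Real.exp_pos _)]
  calc h ^ 2 * lambdaD Ω * Real.exp (2 * m / h) * ∫ x in Ω, ‖u x‖ ^ 2
      = h ^ 2 * (lambdaD Ω * (Real.exp (2 * m / h) * ∫ x in Ω, ‖u x‖ ^ 2)) := by ring
    _ ≤ h ^ 2 * (lambdaD Ω * ∫ x in Ω, ‖gaugeTransform ψ h u x‖ ^ 2) := by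
      gcongr
      · exact lambdaD_nonneg Ω
      · exact hu.exp_mul_setIntegral_norm_sq_le hΩo hh hψ fun x hx => (hbd x hx).1
    _ ≤ h ^ 2 * ∫ x in Ω, (‖pdC 0 (gaugeTransform ψ h u) x‖ ^ 2
          + ‖pdC 1 (gaugeTransform ψ h u) x‖ ^ 2) := by
      gcongr
      exact lambdaD_mul_le hv (gaugeTransform_ne_zero hne)
    _ ≤ Real.exp (2 * M / h) * pauliQ Ω (fun x => -pdR 1 ψ x) (pdR 0 ψ) B h u :=
      hu.sq_mul_setIntegral_norm_pdC_sq_le_exp_mul_pauliQ hΩo hh hψ hΔ fun x hx => (hbd x hx).2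

end EigenvalueComparison

/-- if `B > 0` on `Ω`, `Δψ = B` in `Ω`, `ψ = 0` on `∂Ω`, and
`A = (−∂₂ψ, ∂₁ψ)`, then `λ_{P₋}(h) ≥ h² λ^D(Ω) exp(2ψ_min/h)` for all `h > 0`. -/
theorem stmt2 (Ω : Set E2) (hΩo : IsOpen Ω) (hΩne : Ω.Nonempty)
    (hΩb : Bornology.IsBounded Ω)
    (B ψ : E2 → ℝ)
    (hBsm : ContDiffOn ℝ (⊤ : ℕ∞) B Ω) (hBpos : ∀ x ∈ Ω, 0 < B x)
    (hψc : ContinuousOn ψ (closure Ω))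
    (hψsm : ContDiffOn ℝ (⊤ : ℕ∞) ψ Ω)
    (hΔ : ∀ x ∈ Ω, lapl ψ x = B x)
    (hbd : ∀ x ∈ frontier Ω, ψ x = 0) :
    ∀ h : ℝ, 0 < h →
      lambdaP Ω (fun x => -pdR 1 ψ x) (fun x => pdR 0 ψ x) B h
        ≥ h ^ 2 * lambdaD Ω * Real.exp (2 * sInf (ψ '' Ω) / h) := by
  intro h hh
  simpa only [sub_zero] using stmt2_general hΩo hΩne hψsm hΔ (fun x hx =>
    mem_Icc_sInf_image_of_lapl_pos hΩo hΩb hψc (contDiffOn_infty.mp hψsm 2)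
      (fun y hy => hΔ y hy ▸ hBpos y hy) (fun y hy => (hbd y hy).le) hx) hh
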